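/- Let (Q,·,e) be a simple loop such that all squares lie in (at least) two of the three nuclei, i.e., there are two distinct indices i,j ∈ {ℓ,m,r} with x·x ∈ Nuc_i(Q) ∩ Nuc_j(Q) for all x ∈ Q. Then either Q is a group (the operation · is associative) or Q has exponent two (x·x = e for all x ∈ Q). -/

import Mathlib

/-!
Let `N` be a subloop that contains all squares and lies in the left nucleus. If `a = n x` with
`n ∈ N`, then `n (x a) = a a` puts `x a` into `N`; conversely, if `x a ∈ N`, then
`k = (a a) / (x a)` lies in `N` and `(k x) a = k (x a) = a a`, so `k x = a`. Hence `N x` is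
`{a | x a ∈ N}`, and since `(n x) x = n (x x)` it is also `{a | a x ∈ N}`. If `N` is also right
nuclear, then by symmetry `x N` is the same set. If `N` is also middle nuclear, then
`(x N) x = x (N x) = N = (N x) x`, and `x` can be cancelled. Either way `x N = N x`, and nuclearity
makes `N` normal. In a simple loop, the intersection of two nuclei that contains all squares is
therefore trivial or everything.
-/

/-- A loop `(Q, ·, e)`: a quasigroup with two-sided identity, presented with
explicit left division `ldiv a b = a \ b` and right division `rdiv b a = b / a`. -/
structure LoopStr (Q : Type*) where
  mul : Q → Q → Q
  e : Q
  ldiv : Q → Q → Q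
  rdiv : Q → Q → Q
  one_mul : ∀ x, mul e x = x
  mul_one : ∀ x, mul x e = x
  mul_ldiv : ∀ a b, mul a (ldiv a b) = b
  ldiv_mul : ∀ a b, ldiv a (mul a b) = b
  rdiv_mul : ∀ a b, mul (rdiv b a) a = b
  mul_rdiv : ∀ a b, rdiv (mul b a) a = b

namespace LoopStr

variable {Q : Type*} (S : LoopStr Q)

/-- The left inverse `x^ℓ = e / x`. -/
def linv (x : Q) : Q := S.rdiv S.e x

/-- The right inverse `x^r = x \ e`. -/
def rinv (x : Q) : Q := S.ldiv x S.e

/-- The left nucleus. -/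
def lnuc : Set Q := {a | ∀ x y, S.mul (S.mul a x) y = S.mul a (S.mul x y)}

/-- The middle nucleus. -/
def mnuc : Set Q := {a | ∀ x y, S.mul (S.mul x a) y = S.mul x (S.mul a y)}

/-- The right nucleus. -/
def rnuc : Set Q := {a | ∀ x y, S.mul (S.mul x y) a = S.mul x (S.mul y a)}

/-- The commutant `C(Q)`. -/
def commutant : Set Q := {a | ∀ x, S.mul a x = S.mul x a}

/-- The center `Z(Q) = C(Q) ∩ Nuc_ℓ ∩ Nuc_m ∩ Nuc_r`. -/
def center : Set Q := S.commutant ∩ S.lnuc ∩ S.mnuc ∩ S.rnuc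

/-- The left translation `L_a` as a map. -/
def leftMul (a : Q) : Q → Q := fun x => S.mul a x

/-- The left translation `L_a` as a permutation of `Q`. -/
def leftPerm (a : Q) : Equiv.Perm Q :=
  ⟨fun x => S.mul a x, fun x => S.ldiv a x, S.ldiv_mul a, S.mul_ldiv a⟩

/-- The right translation `R_a` as a permutation of `Q`. -/
def rightPerm (a : Q) : Equiv.Perm Q :=
  ⟨fun x => S.mul x a, fun x => S.rdiv x a, fun x => S.mul_rdiv a x, fun x => S.rdiv_mul a x⟩

/-- The multiplication group `Mlt(Q) = ⟨L_x, R_x : x ∈ Q⟩ ≤ Sym(Q)`. -/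
def Mlt : Subgroup (Equiv.Perm Q) :=
  Subgroup.closure (Set.range S.leftPerm ∪ Set.range S.rightPerm)

/-- `x^n = L_x^n(e)` for natural `n`. -/
def npow (a : Q) (n : ℕ) : Q := (S.leftPerm a ^ n) S.e

/-- `x^n = L_x^n(e)` for integer `n`. -/
def zpow (a : Q) (n : ℤ) : Q := (S.leftPerm a ^ n) S.e

/-- The order of an element: the least `n > 0` with `x^n = e` (or `0` if none exists). -/
noncomputable def lorder (a : Q) : ℕ := sInf {n : ℕ | 0 < n ∧ S.npow a n = S.e}

/-- A subloop: contains `e`, closed under multiplication and both divisions. -/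
def IsSubloop (N : Set Q) : Prop :=
  S.e ∈ N ∧ (∀ a ∈ N, ∀ b ∈ N, S.mul a b ∈ N) ∧
    (∀ a ∈ N, ∀ b ∈ N, S.ldiv a b ∈ N) ∧ (∀ a ∈ N, ∀ b ∈ N, S.rdiv a b ∈ N)

/-- A normal subloop: a subloop with `xN = Nx`, `(xN)y = x(Ny)`, `N(xy) = (Nx)y`
elementwise as sets. -/
def IsNormalSubloop (N : Set Q) : Prop :=
  S.IsSubloop N ∧
  (∀ x : Q, (fun a => S.mul x a) '' N = (fun a => S.mul a x) '' N) ∧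
  (∀ x y : Q, (fun a => S.mul (S.mul x a) y) '' N = (fun a => S.mul x (S.mul a y)) '' N) ∧
  (∀ x y : Q, (fun a => S.mul a (S.mul x y)) '' N = (fun a => S.mul (S.mul a x) y) '' N)

/-- A loop is simple if its only normal subloops are `{e}` and `Q`. -/
def IsSimple : Prop :=
  ∀ N : Set Q, S.IsNormalSubloop N → N = {S.e} ∨ N = Set.univ

lemma mul_rinv (x : Q) : S.mul x (S.rinv x) = S.e := S.mul_ldiv x S.e

lemma linv_mul (x : Q) : S.mul (S.linv x) x = S.e := S.rdiv_mul x S.e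

lemma linv_rinv (x : Q) : S.linv (S.rinv x) = x := by
  have h := S.mul_rdiv (S.rinv x) x
  rw [S.mul_rinv] at h
  exact h

lemma rinv_linv (x : Q) : S.rinv (S.linv x) = x := by
  have h := S.ldiv_mul (S.linv x) x
  rw [S.linv_mul] at h
  exact h

lemma rinv_e : S.rinv S.e = S.e := by
  have h := S.ldiv_mul S.e S.e
  rw [S.one_mul] at h
  exact h

lemma rdiv_e (x : Q) : S.rdiv x S.e = x := by
  have h := S.mul_rdiv S.e x
  rw [S.mul_one] at h
  exact h

/-- The principal right isostrophe `(Q, ∘)` of `(Q, ·)`, with `x ∘ y = x / (y^r)`,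
right division `x // y = x·(y^r)` and left division `x \\ y = (y \ x)^ℓ`. -/
def iso : LoopStr Q where
  mul x y := S.rdiv x (S.rinv y)
  e := S.e
  ldiv x y := S.linv (S.ldiv y x)
  rdiv x y := S.mul x (S.rinv y)
  one_mul x := S.linv_rinv x
  mul_one x := by
    show S.rdiv x (S.rinv S.e) = x
    rw [S.rinv_e, S.rdiv_e]
  mul_ldiv a b := by
    show S.rdiv a (S.rinv (S.linv (S.ldiv b a))) = b
    rw [S.rinv_linv]
    have h := S.mul_rdiv (S.ldiv b a) b
    rw [S.mul_ldiv] at h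
    exact h
  ldiv_mul a b := by
    show S.linv (S.ldiv (S.rdiv a (S.rinv b)) a) = b
    have h := S.ldiv_mul (S.rdiv a (S.rinv b)) (S.rinv b)
    rw [S.rdiv_mul] at h
    rw [h, S.linv_rinv]
  rdiv_mul a b := by
    show S.rdiv (S.mul b (S.rinv a)) (S.rinv a) = b
    exact S.mul_rdiv (S.rinv a) b
  mul_rdiv a b := by
    show S.mul (S.rdiv b (S.rinv a)) (S.rinv a) = b
    exact S.rdiv_mul (S.rinv a) b

end LoopStr

namespace LoopStr

variable {Q : Type*} {S : LoopStr Q} {N : Set Q}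

lemma mul_left_cancel {a b c : Q} (h : S.mul a b = S.mul a c) : b = c :=
  (S.leftPerm a).injective h

lemma mul_right_cancel {a b c : Q} (h : S.mul b a = S.mul c a) : b = c :=
  (S.rightPerm a).injective h

namespace IsSubloop

lemma mul_mem (hN : S.IsSubloop N) {a b : Q} (ha : a ∈ N) (hb : b ∈ N) : S.mul a b ∈ N :=
  hN.2.1 a ha b hb

lemma ldiv_mem (hN : S.IsSubloop N) {a b : Q} (ha : a ∈ N) (hb : b ∈ N) : S.ldiv a b ∈ N :=
  hN.2.2.1 a ha b hb

lemma rdiv_mem (hN : S.IsSubloop N) {a b : Q} (ha : a ∈ N) (hb : b ∈ N) : S.rdiv a b ∈ N :=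
  hN.2.2.2 a ha b hb

lemma mul_mem_cancel_left (hN : S.IsSubloop N) {a b : Q} (ha : a ∈ N) :
    S.mul a b ∈ N ↔ b ∈ N :=
  ⟨fun h => S.ldiv_mul a b ▸ hN.ldiv_mem ha h, hN.mul_mem ha⟩

lemma inter {M : Set Q} (hM : S.IsSubloop M) (hN : S.IsSubloop N) : S.IsSubloop (M ∩ N) :=
  ⟨⟨hM.1, hN.1⟩,
    fun _ ha _ hb => ⟨hM.mul_mem ha.1 hb.1, hN.mul_mem ha.2 hb.2⟩,
    fun _ ha _ hb => ⟨hM.ldiv_mem ha.1 hb.1, hN.ldiv_mem ha.2 hb.2⟩,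
    fun _ ha _ hb => ⟨hM.rdiv_mem ha.1 hb.1, hN.rdiv_mem ha.2 hb.2⟩⟩

lemma of_rinv_mem (he : S.e ∈ N) (hmul : ∀ a ∈ N, ∀ b ∈ N, S.mul a b ∈ N)
    (hrinv : ∀ a ∈ N, S.rinv a ∈ N)
    (hleft : ∀ a ∈ N, ∀ b ∈ N, S.mul a (S.mul (S.rinv a) b) = b)
    (hright : ∀ a ∈ N, ∀ b ∈ N, S.mul (S.mul b (S.rinv a)) a = b) : S.IsSubloop N := by
  refine ⟨he, hmul, fun a ha b hb => ?_, fun b hb a ha => ?_⟩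
  · have hdiv : S.ldiv a b = S.mul (S.rinv a) b :=
      mul_left_cancel ((S.mul_ldiv a b).trans (hleft a ha b hb).symm)
    exact hdiv ▸ hmul _ (hrinv a ha) b hb
  · have hdiv : S.rdiv b a = S.mul b (S.rinv a) :=
      mul_right_cancel ((S.rdiv_mul a b).trans (hright a ha b hb).symm)
    exact hdiv ▸ hmul b hb _ (hrinv a ha)

end IsSubloop

/-- The opposite loop, with multiplication `x ∘ y = y · x`. It exchanges the left and right
nuclei, and left and right cosets; `S.opp.opp = S` holds definitionally. -/
def opp (S : LoopStr Q) : LoopStr Q where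
  mul x y := S.mul y x
  e := S.e
  ldiv a b := S.rdiv b a
  rdiv b a := S.ldiv a b
  one_mul := S.mul_one
  mul_one := S.one_mul
  mul_ldiv := S.rdiv_mul
  ldiv_mul := S.mul_rdiv
  rdiv_mul := S.mul_ldiv
  mul_rdiv := S.ldiv_mul

lemma IsSubloop.opp (hN : S.IsSubloop N) : S.opp.IsSubloop N :=
  ⟨hN.1, fun _ ha _ hb => hN.mul_mem hb ha, fun _ ha _ hb => hN.rdiv_mem hb ha,
    fun _ ha _ hb => hN.ldiv_mem hb ha⟩

variable (S) in
lemma opp_lnuc : S.opp.lnuc = S.rnuc :=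
  Set.ext fun _ => ⟨fun ha x y => (ha y x).symm, fun ha x y => (ha y x).symm⟩

variable (S) in
lemma opp_mnuc : S.opp.mnuc = S.mnuc :=
  Set.ext fun _ => ⟨fun ha x y => (ha y x).symm, fun ha x y => (ha y x).symm⟩

section Nuclei

variable {a : Q}

lemma mul_rinv_cancel_left_of_mem_lnuc (ha : a ∈ S.lnuc) (x : Q) :
    S.mul a (S.mul (S.rinv a) x) = x := by
  rw [← ha, S.mul_rinv, S.one_mul]

lemma rinv_mul_of_mem_lnuc (ha : a ∈ S.lnuc) : S.mul (S.rinv a) a = S.e :=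
  mul_left_cancel (a := a) (by rw [mul_rinv_cancel_left_of_mem_lnuc ha, S.mul_one])

lemma rinv_mem_lnuc (ha : a ∈ S.lnuc) : S.rinv a ∈ S.lnuc := fun x y =>
  mul_left_cancel (a := a) (by
    rw [← ha, mul_rinv_cancel_left_of_mem_lnuc ha, mul_rinv_cancel_left_of_mem_lnuc ha])

variable (S) in
lemma isSubloop_lnuc : S.IsSubloop S.lnuc :=
  .of_rinv_mem (fun x y => by rw [S.one_mul, S.one_mul])
    (fun a ha b hb x y => by rw [ha, ha, hb, ha])
    (fun _ ha => rinv_mem_lnuc ha)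
    (fun _ ha b _ => mul_rinv_cancel_left_of_mem_lnuc ha b)
    (fun _ ha _ hb => by rw [hb, rinv_mul_of_mem_lnuc ha, S.mul_one])

lemma rinv_mul_cancel_right_of_mem_mnuc (ha : a ∈ S.mnuc) (x : Q) :
    S.mul (S.mul x (S.rinv a)) a = x := by
  have hdiv : S.mul x (S.rinv a) = S.rdiv x a := by
    rw [← S.rdiv_mul a x, ha, S.mul_rinv, S.mul_one, S.mul_rdiv]
  rw [hdiv, S.rdiv_mul]

lemma rinv_mul_of_mem_mnuc (ha : a ∈ S.mnuc) : S.mul (S.rinv a) a = S.e := by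
  simpa only [S.one_mul] using rinv_mul_cancel_right_of_mem_mnuc ha S.e

lemma mul_rinv_cancel_left_of_mem_mnuc (ha : a ∈ S.mnuc) (x : Q) :
    S.mul a (S.mul (S.rinv a) x) = x := by
  have hdiv : S.mul (S.rinv a) x = S.ldiv a x := by
    rw [← S.mul_ldiv a x, ← ha, rinv_mul_of_mem_mnuc ha, S.one_mul, S.ldiv_mul]
  rw [hdiv, S.mul_ldiv]

lemma rinv_mem_mnuc (ha : a ∈ S.mnuc) : S.rinv a ∈ S.mnuc := fun x y => by
  have h := ha (S.mul x (S.rinv a)) (S.mul (S.rinv a) y)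
  rwa [rinv_mul_cancel_right_of_mem_mnuc ha, mul_rinv_cancel_left_of_mem_mnuc ha,
    eq_comm] at h

variable (S) in
lemma isSubloop_mnuc : S.IsSubloop S.mnuc :=
  .of_rinv_mem (fun x y => by rw [S.mul_one, S.one_mul])
    (fun a ha b hb x y => by rw [← ha, hb, ha, ← hb])
    (fun _ ha => rinv_mem_mnuc ha)
    (fun _ ha b _ => mul_rinv_cancel_left_of_mem_mnuc ha b)
    (fun _ ha b _ => rinv_mul_cancel_right_of_mem_mnuc ha b)

variable (S) in
lemma isSubloop_rnuc : S.IsSubloop S.rnuc :=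
  S.opp_lnuc ▸ S.opp.isSubloop_lnuc.opp

end Nuclei

/-- The coset `x N`, in the form in which it occurs in `IsNormalSubloop`. -/
def leftCoset (S : LoopStr Q) (x : Q) (N : Set Q) : Set Q := (fun a => S.mul x a) '' N

/-- The coset `N x`, in the form in which it occurs in `IsNormalSubloop`. -/
def rightCoset (S : LoopStr Q) (N : Set Q) (x : Q) : Set Q := (fun a => S.mul a x) '' N

lemma image_comp_mul_left_eq_image_comp_mul_right {x : Q}
    (h : S.leftCoset x N = S.rightCoset N x) (f : Q → Q) :
    (fun a => f (S.mul x a)) '' N = (fun a => f (S.mul a x)) '' N := by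
  simpa only [leftCoset, rightCoset, Set.image_image] using congrArg (Set.image f) h

lemma IsNormalSubloop.opp (hN : S.IsNormalSubloop N) : S.opp.IsNormalSubloop N := by
  obtain ⟨hsub, hcomm, hmiddle, hleft⟩ := hN
  refine ⟨hsub.opp, fun x => (hcomm x).symm, fun x y => (hmiddle y x).symm, fun x y => ?_⟩
  calc (fun a => S.mul (S.mul y x) a) '' N
    _ = (fun a => S.mul a (S.mul y x)) '' N := hcomm (S.mul y x)
    _ = (fun a => S.mul (S.mul a y) x) '' N := hleft y x
    _ = (fun a => S.mul (S.mul y a) x) '' N :=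
      (image_comp_mul_left_eq_image_comp_mul_right (hcomm y) (S.mul · x)).symm
    _ = (fun a => S.mul y (S.mul a x)) '' N := hmiddle y x
    _ = (fun a => S.mul y (S.mul x a)) '' N :=
      (image_comp_mul_left_eq_image_comp_mul_right (hcomm x) (S.mul y)).symm

namespace IsSubloop

lemma mem_rightCoset_iff_mul_right_mem (hN : S.IsSubloop N) (hl : N ⊆ S.lnuc) {x : Q}
    (hx : S.mul x x ∈ N) {a : Q} : a ∈ S.rightCoset N x ↔ S.mul a x ∈ N := by
  constructor
  · rintro ⟨n, hn, rfl⟩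
    exact (hl hn x x).symm ▸ hN.mul_mem hn hx
  · intro hax
    have hk := hN.rdiv_mem hax hx
    exact ⟨_, hk, mul_right_cancel (a := x) (by rw [hl hk, S.rdiv_mul])⟩

lemma mem_rightCoset_iff_mul_left_mem (hN : S.IsSubloop N) (hl : N ⊆ S.lnuc)
    (hsq : ∀ x, S.mul x x ∈ N) {x a : Q} : a ∈ S.rightCoset N x ↔ S.mul x a ∈ N := by
  constructor
  · rintro ⟨n, hn, rfl⟩
    rw [← hN.mul_mem_cancel_left hn, ← hl hn]
    exact hsq (S.mul n x)
  · intro hxa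
    have hk := hN.rdiv_mem (hsq a) hxa
    exact ⟨_, hk, mul_right_cancel (a := a) (by rw [hl hk, S.rdiv_mul])⟩

lemma leftCoset_eq_rightCoset_of_lnuc_mnuc (hN : S.IsSubloop N) (hl : N ⊆ S.lnuc)
    (hm : N ⊆ S.mnuc) (hsq : ∀ x, S.mul x x ∈ N) (x : Q) :
    S.leftCoset x N = S.rightCoset N x := by
  ext a
  rw [hN.mem_rightCoset_iff_mul_right_mem hl (hsq x)]
  constructor
  · rintro ⟨n, hn, rfl⟩
    rw [hm hn, ← hN.mem_rightCoset_iff_mul_left_mem hl hsq]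
    exact ⟨n, hn, rfl⟩
  · intro hax
    rw [← S.mul_ldiv x (S.mul a x), ← hN.mem_rightCoset_iff_mul_left_mem hl hsq] at hax
    obtain ⟨k, hk, hkx : S.mul k x = S.ldiv x (S.mul a x)⟩ := hax
    exact ⟨k, hk, mul_right_cancel (a := x) (by rw [hm hk, hkx, S.mul_ldiv])⟩

lemma leftCoset_eq_rightCoset_of_lnuc_rnuc (hN : S.IsSubloop N) (hl : N ⊆ S.lnuc)
    (hr : N ⊆ S.rnuc) (hsq : ∀ x, S.mul x x ∈ N) (x : Q) :
    S.leftCoset x N = S.rightCoset N x := by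
  ext a
  have hleft : a ∈ S.leftCoset x N ↔ S.mul a x ∈ N :=
    hN.opp.mem_rightCoset_iff_mul_left_mem (S.opp_lnuc.symm ▸ hr) hsq
  rw [hleft, hN.mem_rightCoset_iff_mul_right_mem hl (hsq x)]

lemma isNormalSubloop_of_lnuc_mnuc (hN : S.IsSubloop N) (hl : N ⊆ S.lnuc) (hm : N ⊆ S.mnuc)
    (hsq : ∀ x, S.mul x x ∈ N) : S.IsNormalSubloop N :=
  ⟨hN, hN.leftCoset_eq_rightCoset_of_lnuc_mnuc hl hm hsq,
    fun x y => Set.image_congr fun _ hn => hm hn x y,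
    fun x y => Set.image_congr fun _ hn => (hl hn x y).symm⟩

lemma isNormalSubloop_of_lnuc_rnuc (hN : S.IsSubloop N) (hl : N ⊆ S.lnuc) (hr : N ⊆ S.rnuc)
    (hsq : ∀ x, S.mul x x ∈ N) : S.IsNormalSubloop N := by
  have hcomm := hN.leftCoset_eq_rightCoset_of_lnuc_rnuc hl hr hsq
  have hleft (x y : Q) :
      (fun a => S.mul a (S.mul x y)) '' N = (fun a => S.mul (S.mul a x) y) '' N :=
    Set.image_congr fun _ hn => (hl hn x y).symm
  refine ⟨hN, hcomm, fun x y => ?_, hleft⟩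
  calc (fun a => S.mul (S.mul x a) y) '' N
    _ = (fun a => S.mul (S.mul a x) y) '' N :=
      image_comp_mul_left_eq_image_comp_mul_right (hcomm x) (S.mul · y)
    _ = (fun a => S.mul a (S.mul x y)) '' N := (hleft x y).symm
    _ = (fun a => S.mul (S.mul x y) a) '' N := (hcomm (S.mul x y)).symm
    _ = (fun a => S.mul x (S.mul y a)) '' N := Set.image_congr fun _ hn => hr hn x y
    _ = (fun a => S.mul x (S.mul a y)) '' N :=
      image_comp_mul_left_eq_image_comp_mul_right (hcomm y) (S.mul x)

lemma isNormalSubloop_of_mnuc_rnuc (hN : S.IsSubloop N) (hm : N ⊆ S.mnuc) (hr : N ⊆ S.rnuc)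
    (hsq : ∀ x, S.mul x x ∈ N) : S.IsNormalSubloop N :=
  (hN.opp.isNormalSubloop_of_lnuc_mnuc (S.opp_lnuc.symm ▸ hr) (S.opp_mnuc.symm ▸ hm) hsq).opp

end IsSubloop

lemma IsSimple.forall_mem_or_mul_self_eq (hS : S.IsSimple) (hN : S.IsNormalSubloop N)
    (hsq : ∀ x, S.mul x x ∈ N) : (∀ x, x ∈ N) ∨ ∀ x, S.mul x x = S.e := by
  rcases hS N hN with rfl | rfl
  · exact .inr hsq
  · exact .inl Set.mem_univ

end LoopStr

/-- A simple loop with all squares in (at least) two of the three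
nuclei is either a group or has exponent two. -/
theorem simple_two_nuclei {Q : Type*} (S : LoopStr Q)
    (hSimple : S.IsSimple)
    (hsq : (∀ x : Q, S.mul x x ∈ S.lnuc ∩ S.mnuc) ∨
           (∀ x : Q, S.mul x x ∈ S.lnuc ∩ S.rnuc) ∨
           (∀ x : Q, S.mul x x ∈ S.mnuc ∩ S.rnuc)) :
    (∀ x y z : Q, S.mul (S.mul x y) z = S.mul x (S.mul y z)) ∨
    (∀ x : Q, S.mul x x = S.e) := by
  rcases hsq with hsq | hsq | hsq
  · have hN := (S.isSubloop_lnuc.inter S.isSubloop_mnuc).isNormalSubloop_of_lnuc_mnuc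
      Set.inter_subset_left Set.inter_subset_right hsq
    exact (hSimple.forall_mem_or_mul_self_eq hN hsq).imp_left fun h x => (h x).1
  · have hN := (S.isSubloop_lnuc.inter S.isSubloop_rnuc).isNormalSubloop_of_lnuc_rnuc
      Set.inter_subset_left Set.inter_subset_right hsq
    exact (hSimple.forall_mem_or_mul_self_eq hN hsq).imp_left fun h x => (h x).1
  · have hN := (S.isSubloop_mnuc.inter S.isSubloop_rnuc).isNormalSubloop_of_mnuc_rnuc
      Set.inter_subset_left Set.inter_subset_right hsq
    exact (hSimple.forall_mem_or_mul_self_eq hN hsq).imp_left fun h x y z => (h y).1 x z
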